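/- Let ε ∈ (0,1) be irrational, let ℓ satisfy max{ε,1−ε} < ℓ < 1, let x0 ∈ [0,ℓ), and let u = u_{ε,ℓ,x0} be the corresponding 3iet word. Then σ01(u) and σ10(u) are Sturmian words of slope ε; in particular each of σ01(u) and σ10(u) has the same set of factors as the Sturmian word u_{ε,x} for every x ∈ [0,1). -/

import Mathlib

/-!
The map `T_ε` is the rotation by `-ε` of the circle `[0,1)`, and a three-interval exchange
`T_{ε,ℓ}` is an induced map of it: the first-return map to an interval of length `ℓ`, the letters
`A`, `C` having return time one and `B` return time two.

* For `σ01`, the interval is `[0, ℓ)`: a point of `I_B` is sent by `T_ε` into `[ℓ, 1)` (letters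
  `0`, then `1`) and then back to `[0, ℓ)`. Hence `σ01(u_{ε,ℓ,x0}) = u_{ε,x0}`.
* For `σ10`, the interval is `[1-ℓ, 1)`, identified with `[0, ℓ)` by the shift `x ↦ x + (1-ℓ)`: a
  point of the shifted `I_B` is sent into `[0, 1-ℓ)` (letters `1`, then `0`) and then back. Hence
  `σ10(u_{ε,ℓ,x0}) = u_{ε,x0+1-ℓ}`.

Both cases are instances of `morphWord_eq_u2`, whose hypothesis is the one-letter statement of this
correspondence. The equality of the sets of factors follows because all Sturmian words of slope `ε`
have the same factors (`isFactor_u2_of_isFactor_u2`): the points whose codings agree with that of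
`z` on a given length contain a right neighbourhood of `z` (`exists_right_nhd_u2`), and every
forward orbit of an irrational rotation meets every interval (`exists_iterate_T2_mem`).
-/

/-- The alphabet of 3iet words. -/
inductive L3 | A | B | C
deriving DecidableEq, Inhabited

/-- The three-interval exchange transformation `T_{ε,ℓ}`. -/
noncomputable def T3 (ε ℓ : ℝ) (x : ℝ) : ℝ :=
  if x < ℓ - 1 + ε then x + 1 - ε
  else if x < ε then x + 1 - 2*ε
  else x - ε

/-- The 3iet word `u_{ε,ℓ,x0}` coding the orbit of `x0` under `T_{ε,ℓ}`. -/
noncomputable def u3 (ε ℓ x0 : ℝ) (n : ℕ) : L3 :=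
  if (T3 ε ℓ)^[n] x0 < ℓ - 1 + ε then L3.A
  else if (T3 ε ℓ)^[n] x0 < ε then L3.B
  else L3.C

/-- The two-interval exchange transformation `T_ε`. -/
noncomputable def T2 (ε : ℝ) (x : ℝ) : ℝ := if x < ε then x + 1 - ε else x - ε

/-- The Sturmian word `u_{ε,x0}` of slope `ε` coding the orbit of `x0` under `T_ε`
(letter `0` is `false`, letter `1` is `true`). -/
noncomputable def u2 (ε x0 : ℝ) (n : ℕ) : Bool := if (T2 ε)^[n] x0 < ε then false else true

/-- `w` is a factor of the infinite word `u`. -/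
def IsFactor {α : Type*} (w : List α) (u : ℕ → α) : Prop :=
  ∃ i : ℕ, w = (List.range w.length).map fun j => u (i + j)

/-- The prefix of length `m` of the periodic infinite word `www⋯`;
for `|w| ≤ m` this is the fractional power `w^{m/|w|}`. -/
def powPrefix {α : Type*} [Inhabited α] (w : List α) (m : ℕ) : List α :=
  (List.range m).map fun j => w.getD (j % w.length) default

/-- The index of the factor `w` in the infinite word `u`:
`sup {r ∈ ℚ, r ≥ 1, r|w| ∈ ℕ | w^r is a factor of u}`, as an element of `ℝ ∪ {+∞}`. -/
noncomputable def factorIndex {α : Type*} [Inhabited α] (u : ℕ → α) (w : List α) : EReal :=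
  sSup {x : EReal | ∃ m : ℕ, w.length ≤ m ∧ IsFactor (powPrefix w m) u ∧
    x = (((m : ℝ) / (w.length : ℝ) : ℝ) : EReal)}

/-- The index of the infinite word `u`: `sup {ind(w) | w a nonempty factor of u}`. -/
noncomputable def wordIndex {α : Type*} [Inhabited α] (u : ℕ → α) : EReal :=
  sSup {x : EReal | ∃ w : List α, w ≠ [] ∧ IsFactor w u ∧ x = factorIndex u w}

/-- The Gauss map `x ↦ {1/x}`. -/
noncomputable def gaussMap (x : ℝ) : ℝ := Int.fract x⁻¹

/-- `cfa ε n` is the partial quotient `a_{n+1}` of the continued fraction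
expansion `ε = [0; a₁, a₂, a₃, …]` of the irrational `ε ∈ (0,1)`. -/
noncomputable def cfa (ε : ℝ) (n : ℕ) : ℕ := ⌊(gaussMap^[n] ε)⁻¹⌋₊

/-- The morphism `σ01 : A ↦ 0, B ↦ 01, C ↦ 1`. -/
def sigma01 : L3 → List Bool
  | L3.A => [false]
  | L3.B => [false, true]
  | L3.C => [true]

/-- The morphism `σ10 : A ↦ 0, B ↦ 10, C ↦ 1`. -/
def sigma10 : L3 → List Bool
  | L3.A => [false]
  | L3.B => [true, false]
  | L3.C => [true]

/-- The image `φ(u₀)φ(u₁)φ(u₂)⋯` of an infinite word `u` under a (nonerasing) morphism `φ`. -/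
def morphWord (φ : L3 → List Bool) (u : ℕ → L3) (m : ℕ) : Bool :=
  ((List.range (m+1)).flatMap fun k => φ (u k)).getD m false

/-- `u` is a uniformly recurrent infinite word: every factor occurs infinitely often
with bounded gaps (every window of some length `R` contains an occurrence). -/
def UniformlyRecurrent {α : Type*} (u : ℕ → α) : Prop :=
  ∀ w : List α, IsFactor w u → ∃ R : ℕ, ∀ i : ℕ, ∃ j : ℕ, i ≤ j ∧ j < i + R ∧
    w = (List.range w.length).map fun t => u (j + t)

/-- `u` is eventually periodic. -/
def EventuallyPeriodic {α : Type*} (u : ℕ → α) : Prop :=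
  ∃ N p : ℕ, 0 < p ∧ ∀ n : ℕ, N ≤ n → u (n + p) = u n

/-- The standard words of `ε = [0; a₁, a₂, …]`, with the index shifted by one:
`sw ε 0 = s₋₁ = 1`, `sw ε 1 = s₀ = 0`, `sw ε 2 = s₁ = s₀^{a₁-1} s₋₁`, and
`sw ε (n+3) = s_{n+2} = s_{n+1}^{a_{n+2}} s_n`. -/
noncomputable def sw (ε : ℝ) : ℕ → List Bool
  | 0 => [true]
  | 1 => [false]
  | 2 => (List.replicate (cfa ε 0 - 1) ([false] : List Bool)).flatten ++ [true]
  | (n+3) => (List.replicate (cfa ε (n+1)) (sw ε (n+2))).flatten ++ sw ε (n+1)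

/-- Denominators of the convergents of `ε`, shifted by one: `qq ε 0 = q₋₁ = 0`,
`qq ε 1 = q₀ = 1`, and `qq ε (n+2) = q_{n+1} = a_{n+1} q_n + q_{n-1}`. -/
noncomputable def qq (ε : ℝ) : ℕ → ℕ
  | 0 => 0
  | 1 => 1
  | (n+2) => cfa ε n * qq ε (n+1) + qq ε n

/-- `u` is a 3iet word. -/
def Is3ietWord (u : ℕ → L3) : Prop :=
  ∃ ε ℓ x0 : ℝ, Irrational ε ∧ 0 < ε ∧ ε < 1 ∧ max ε (1 - ε) < ℓ ∧ ℓ < 1 ∧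
    x0 ∈ Set.Ico 0 ℓ ∧ u = u3 ε ℓ x0

/-- `v` is a Sturmian word. -/
def IsSturmianWord (v : ℕ → Bool) : Prop :=
  ∃ ε x0 : ℝ, Irrational ε ∧ 0 < ε ∧ ε < 1 ∧ x0 ∈ Set.Ico (0:ℝ) 1 ∧ v = u2 ε x0

/-- The infinite binary word `v1` is amicable with `v2` (`v1 ∝ v2`). -/
def AmicableInf (v1 v2 : ℕ → Bool) : Prop :=
  ∃ w : ℕ → L3, v1 = morphWord sigma01 w ∧ v2 = morphWord sigma10 w

/-- The morphism `Φ_k : A ↦ 0, B ↦ 01^{k+1}, C ↦ 01^k`. -/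
def Phi (k : ℕ) : L3 → List Bool
  | L3.A => [false]
  | L3.B => false :: List.replicate (k+1) true
  | L3.C => false :: List.replicate k true

/-- The infinite word `B₀B₁B₂⋯` obtained by concatenating the sequence of
(nonempty) blocks `B`. -/
def concatOfBlocks (B : ℕ → List Bool) (m : ℕ) : Bool :=
  ((List.range (m+1)).flatMap B).getD m false

lemma T2_mem {ε x : ℝ} (h0 : 0 < ε) (h1 : ε < 1) (hx : x ∈ Set.Ico (0:ℝ) 1) :
    T2 ε x ∈ Set.Ico (0:ℝ) 1 := by
  obtain ⟨ha, hb⟩ := hx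
  unfold T2
  split_ifs with h
  · constructor <;> linarith
  · constructor <;> linarith

/-- `T_ε` is rotation by `-ε`: on `[0,1)`, its iterates are translations by `-kε` modulo `1`. -/
lemma T2_iterate {ε x : ℝ} (h0 : 0 < ε) (h1 : ε < 1) (hx : x ∈ Set.Ico (0:ℝ) 1) (k : ℕ) :
    (T2 ε)^[k] x ∈ Set.Ico (0:ℝ) 1 ∧ ∃ n : ℤ, (T2 ε)^[k] x = x - k * ε + n := by
  induction k with
  | zero => exact ⟨hx, 0, by simp⟩
  | succ k ih =>
    obtain ⟨hm, n, hn⟩ := ih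
    rw [Function.iterate_succ_apply']
    refine ⟨T2_mem h0 h1 hm, ?_⟩
    rw [T2]
    split_ifs
    · exact ⟨n + 1, by rw [hn]; push_cast; ring⟩
    · exact ⟨n, by rw [hn]; push_cast; ring⟩

lemma exists_iterate_T2_mem {ε x z δ : ℝ} (hirr : Irrational ε) (h0 : 0 < ε) (h1 : ε < 1)
    (hx : x ∈ Set.Ico (0:ℝ) 1) (hz : 0 ≤ z) (hδ : 0 < δ) (hzδ : z + δ ≤ 1) :
    ∃ k : ℕ, (T2 ε)^[k] x ∈ Set.Ioo z (z + δ) := by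
  have : Fact ((0:ℝ) < 1) := ⟨one_pos⟩
  have hd : DenseRange (· • ((-ε : ℝ) : AddCircle (1:ℝ)) : ℕ → AddCircle (1:ℝ)) := by
    rw [← denseRange_zsmul_iff_nsmul, AddCircle.denseRange_zsmul_coe_iff]
    simpa using hirr.neg
  have hopen : IsOpen ((fun t : ℝ => (t : AddCircle (1:ℝ))) '' Set.Ioo (z - x) (z - x + δ)) :=
    QuotientAddGroup.isOpenMap_coe _ isOpen_Ioo
  obtain ⟨k, t, ht, hk⟩ := hd.exists_mem_open hopen
    ((Set.nonempty_Ioo.2 (by linarith)).image _)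
  obtain ⟨hm, n, hn⟩ := T2_iterate h0 h1 hx k
  refine ⟨k, ?_⟩
  have hk' : (t : AddCircle (1:ℝ)) = ((k • (-ε) : ℝ) : AddCircle (1:ℝ)) := by
    rw [AddCircle.coe_nsmul]; exact hk
  rw [QuotientAddGroup.eq] at hk'
  obtain ⟨m, hmm⟩ := AddSubgroup.mem_zmultiples_iff.1 hk'
  simp only [nsmul_eq_mul, zsmul_eq_mul, mul_one] at hmm
  obtain ⟨ht1, ht2⟩ := ht
  -- `T_ε^k x` and `x + t` are congruent modulo `1` and both lie in `[0,1)`.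
  have key : (T2 ε)^[k] x = x + t + ((m + n : ℤ) : ℝ) := by
    rw [hn]; push_cast; linarith
  have hmn : m + n = 0 := by
    obtain ⟨h2, h3⟩ := hm
    rw [key] at h2 h3
    have h4 : ((m + n : ℤ) : ℝ) < 1 := by linarith
    have h5 : (-1 : ℝ) < ((m + n : ℤ) : ℝ) := by linarith
    have h4' : m + n < 1 := by exact_mod_cast h4
    have h5' : -1 < m + n := by exact_mod_cast h5
    omega
  rw [key, hmn]
  constructor <;> push_cast <;> linarith

/-- Right-continuity of `T_ε`: points slightly to the right of `z` have the same coding up to a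
given length. -/
lemma exists_right_nhd_u2 {ε : ℝ} (h0 : 0 < ε) (h1 : ε < 1) (n : ℕ) :
    ∀ z ∈ Set.Ico (0:ℝ) 1, ∃ δ > 0, z + δ ≤ 1 ∧
      ∀ t ∈ Set.Ico (0:ℝ) δ, ∀ j < n, u2 ε (z + t) j = u2 ε z j := by
  induction n with
  | zero => exact fun z hz => ⟨1 - z, by linarith [hz.2], by linarith, by simp⟩
  | succ n ih =>
    intro z hz
    obtain ⟨δ, hδ, -, h⟩ := ih (T2 ε z) (T2_mem h0 h1 hz)
    have step : ∀ (y : ℝ) (j : ℕ), u2 ε y (j + 1) = u2 ε (T2 ε y) j := fun y j => by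
      rw [u2, u2, Function.iterate_succ_apply]
    -- The radius must keep `z + t` below the next endpoint, `ε` or `1`.
    obtain ⟨η, hη, hη1, hT⟩ : ∃ η > 0, z + η ≤ 1 ∧ ∀ t, 0 ≤ t → t < η →
        T2 ε (z + t) = T2 ε z + t ∧ (z + t < ε ↔ z < ε) := by
      by_cases hzε : z < ε
      · refine ⟨ε - z, by linarith, by linarith, fun t ht0 ht => ?_⟩
        have : z + t < ε := by linarith
        refine ⟨?_, by simp [this, hzε]⟩
        simp only [T2, this, hzε, if_true]; ring
      · refine ⟨1 - z, by linarith [hz.2], by linarith, fun t ht0 ht => ?_⟩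
        have : ¬ z + t < ε := by linarith
        refine ⟨?_, by simp [this, hzε]⟩
        simp only [T2, this, hzε, if_false]; ring
    refine ⟨min δ η, lt_min hδ hη, by linarith [min_le_right δ η], fun t ht j hj => ?_⟩
    obtain ⟨e1, e2⟩ := hT t ht.1 (lt_of_lt_of_le ht.2 (min_le_right _ _))
    cases j with
    | zero => by_cases hzε : z < ε <;> simp [u2, e2, hzε]
    | succ j =>
      rw [step, step, e1]
      exact h t ⟨ht.1, lt_of_lt_of_le ht.2 (min_le_left _ _)⟩ j (by omega)

lemma u2_add (ε x : ℝ) (i j : ℕ) : u2 ε x (i + j) = u2 ε ((T2 ε)^[i] x) j := by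
  simp only [u2, ← Function.iterate_add_apply, Nat.add_comm]

lemma isFactor_u2_of_isFactor_u2 {ε x y : ℝ} (hirr : Irrational ε) (h0 : 0 < ε) (h1 : ε < 1)
    (hx : x ∈ Set.Ico (0:ℝ) 1) (hy : y ∈ Set.Ico (0:ℝ) 1) {w : List Bool}
    (hw : IsFactor w (u2 ε y)) : IsFactor w (u2 ε x) := by
  obtain ⟨i, hi⟩ := hw
  have hz := (T2_iterate h0 h1 hy i).1
  obtain ⟨δ, hδ, hδ1, h⟩ := exists_right_nhd_u2 h0 h1 w.length _ hz
  obtain ⟨k, hk1, hk2⟩ := exists_iterate_T2_mem hirr h0 h1 hx hz.1 hδ hδ1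
  refine ⟨k, hi.trans (List.map_congr_left fun j hj => ?_)⟩
  have := h ((T2 ε)^[k] x - (T2 ε)^[i] y) ⟨by linarith, by linarith⟩ j (List.mem_range.1 hj)
  rw [u2_add, u2_add, ← this]
  congr 1; ring

/-- The letter of `{A,B,C}` coding the position of `x`. -/
noncomputable def letter3 (ε ℓ x : ℝ) : L3 :=
  if x < ℓ - 1 + ε then L3.A else if x < ε then L3.B else L3.C

lemma T3_mem {ε ℓ x : ℝ} (hl : max ε (1 - ε) < ℓ) (hl1 : ℓ < 1)
    (hx : x ∈ Set.Ico (0:ℝ) ℓ) : T3 ε ℓ x ∈ Set.Ico (0:ℝ) ℓ := by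
  obtain ⟨ha, hb⟩ := hx
  obtain ⟨h2, h3⟩ := max_lt_iff.1 hl
  unfold T3
  split_ifs
  · constructor <;> linarith
  · constructor <;> linarith
  · constructor <;> linarith

/-- If, after the shift by `s`, each step of `T_{ε,ℓ}` is realised by as many steps of `T_ε` as
`φ` of its letter is long, with `φ` of the letter as coding, then `φ` maps the 3iet word of `x0`
to the Sturmian word of `x0 + s`. -/
lemma morphWord_eq_u2 {ε ℓ s x0 : ℝ} (φ : L3 → List Bool)
    (hl : max ε (1 - ε) < ℓ) (hl1 : ℓ < 1) (hx0 : x0 ∈ Set.Ico 0 ℓ)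
    (hne : ∀ a, 1 ≤ (φ a).length)
    (hφ : ∀ x ∈ Set.Ico (0:ℝ) ℓ,
      φ (letter3 ε ℓ x) = (List.range (φ (letter3 ε ℓ x)).length).map (u2 ε (x + s)) ∧
      (T2 ε)^[(φ (letter3 ε ℓ x)).length] (x + s) = T3 ε ℓ x + s) :
    morphWord φ (u3 ε ℓ x0) = u2 ε (x0 + s) := by
  -- The image of the prefix of length `n` is a prefix, of some length `N ≥ n`.
  have main : ∀ n : ℕ, (T3 ε ℓ)^[n] x0 ∈ Set.Ico (0:ℝ) ℓ ∧ ∃ N : ℕ, n ≤ N ∧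
      (List.range n).flatMap (fun k => φ (u3 ε ℓ x0 k)) = (List.range N).map (u2 ε (x0 + s)) ∧
      (T2 ε)^[N] (x0 + s) = (T3 ε ℓ)^[n] x0 + s := by
    intro n
    induction n with
    | zero => exact ⟨hx0, 0, le_rfl, by simp, by simp⟩
    | succ n ih =>
      obtain ⟨hm, N, hN, hpre, hT⟩ := ih
      obtain ⟨e1, e2⟩ := hφ _ hm
      have hu : u3 ε ℓ x0 n = letter3 ε ℓ ((T3 ε ℓ)^[n] x0) := rfl
      have hlen := hne (letter3 ε ℓ ((T3 ε ℓ)^[n] x0))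
      rw [Function.iterate_succ_apply']
      refine ⟨T3_mem hl hl1 hm, N + (φ (letter3 ε ℓ ((T3 ε ℓ)^[n] x0))).length, by omega, ?_, ?_⟩
      · rw [List.range_succ, List.flatMap_append, hpre, List.range_add, List.map_append]
        congr 1
        simp only [List.flatMap_cons, List.flatMap_nil, List.append_nil, hu, List.map_map]
        conv_lhs => rw [e1]
        refine List.map_congr_left fun j _ => ?_
        rw [Function.comp_apply, u2_add, hT]
      · rw [Nat.add_comm, Function.iterate_add_apply, hT, e2]
  funext m
  obtain ⟨-, N, hN, hpre, -⟩ := main (m + 1)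
  have hmN : m < N := by omega
  rw [morphWord, hpre]
  simp [List.getD, hmN]

lemma morphWord_sigma01 {ε ℓ x0 : ℝ}
    (hl : max ε (1 - ε) < ℓ) (hl1 : ℓ < 1) (hx0 : x0 ∈ Set.Ico 0 ℓ) :
    morphWord sigma01 (u3 ε ℓ x0) = u2 ε x0 := by
  obtain ⟨h2, h3⟩ := max_lt_iff.1 hl
  have := morphWord_eq_u2 (s := 0) sigma01 hl hl1 hx0 (by rintro (_ | _ | _) <;> simp [sigma01])
    (by
      rintro x ⟨hx, hx'⟩
      rw [add_zero, add_zero]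
      by_cases hA : x < ℓ - 1 + ε
      · have hB : x < ε := by linarith
        simp [letter3, T3, T2, u2, hA, hB, sigma01]
      · by_cases hB : x < ε
        · have hC : ¬ x + 1 - ε < ε := by linarith
          simp [letter3, T3, T2, u2, hA, hB, hC, sigma01, List.range_succ]
          ring
        · simp [letter3, T3, T2, u2, hA, hB, sigma01])
  rwa [add_zero] at this

lemma morphWord_sigma10 {ε ℓ x0 : ℝ}
    (hl : max ε (1 - ε) < ℓ) (hl1 : ℓ < 1) (hx0 : x0 ∈ Set.Ico 0 ℓ) :
    morphWord sigma10 (u3 ε ℓ x0) = u2 ε (x0 + (1 - ℓ)) := by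
  obtain ⟨h2, h3⟩ := max_lt_iff.1 hl
  refine morphWord_eq_u2 sigma10 hl hl1 hx0 (by rintro (_ | _ | _) <;> simp [sigma10]) ?_
  rintro x ⟨hx, hx'⟩
  by_cases hA : x < ℓ - 1 + ε
  · have hB : x + (1 - ℓ) < ε := by linarith
    simp [letter3, T3, T2, u2, hA, hB, sigma10]
    ring
  · have hD : ¬ x + (1 - ℓ) < ε := by linarith
    by_cases hB : x < ε
    · have hC : x + (1 - ℓ) - ε < ε := by linarith
      simp [letter3, T3, T2, u2, hA, hB, hC, hD, sigma10, List.range_succ]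
      ring
    · simp [letter3, T3, T2, u2, hA, hB, hD, sigma10]
      ring

/-- the images of a 3iet word with parameters `ε, ℓ` under `σ01` and `σ10`
are Sturmian words of slope `ε`; in particular each has the same set of factors as the
Sturmian word `u_{ε,x}` for every `x ∈ [0,1)`. -/
theorem threeIet_images_sturmian_of_slope
    (ε ℓ x0 : ℝ) (hirr : Irrational ε) (h0 : 0 < ε) (h1 : ε < 1)
    (hl : max ε (1 - ε) < ℓ) (hl1 : ℓ < 1) (hx0 : x0 ∈ Set.Ico 0 ℓ) :
    (∃ y : ℝ, y ∈ Set.Ico (0:ℝ) 1 ∧ morphWord sigma01 (u3 ε ℓ x0) = u2 ε y) ∧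
    (∃ y : ℝ, y ∈ Set.Ico (0:ℝ) 1 ∧ morphWord sigma10 (u3 ε ℓ x0) = u2 ε y) ∧
    (∀ x : ℝ, x ∈ Set.Ico (0:ℝ) 1 →
      (∀ w : List Bool, IsFactor w (morphWord sigma01 (u3 ε ℓ x0)) ↔ IsFactor w (u2 ε x)) ∧
      (∀ w : List Bool, IsFactor w (morphWord sigma10 (u3 ε ℓ x0)) ↔ IsFactor w (u2 ε x))) := by
  obtain ⟨h2, h3⟩ := max_lt_iff.1 hl
  have hy1 : x0 ∈ Set.Ico (0:ℝ) 1 := ⟨hx0.1, hx0.2.trans hl1⟩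
  have hy2 : x0 + (1 - ℓ) ∈ Set.Ico (0:ℝ) 1 := ⟨by linarith [hx0.1], by linarith [hx0.2]⟩
  rw [morphWord_sigma01 hl hl1 hx0, morphWord_sigma10 hl hl1 hx0]
  refine ⟨⟨x0, hy1, rfl⟩, ⟨_, hy2, rfl⟩, fun x hx => ⟨fun w => ⟨?_, ?_⟩, fun w => ⟨?_, ?_⟩⟩⟩
  · exact isFactor_u2_of_isFactor_u2 hirr h0 h1 hx hy1
  · exact isFactor_u2_of_isFactor_u2 hirr h0 h1 hy1 hx
  · exact isFactor_u2_of_isFactor_u2 hirr h0 h1 hx hy2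
  · exact isFactor_u2_of_isFactor_u2 hirr h0 h1 hy2 hx
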